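/- arXiv:1808.03237 — 7 statements merged into one kernel-verified Lean document; each statement's English description precedes it below -/
import Mathlib

section
/- The function g is continuously differentiable on ℝ² (in particular the two branches of its definition fit together in a C¹ fashion along the line k = 0). -/
/-!
Let `E x = (exp x - 1) / x`, with `E 0 = 1`; this is `dslope Real.exp 0`, a real-analytic positive
function with `exp x = 1 + x * E x`. Writing every exponential in `g` through `E`, both the numerator
and the denominator acquire a factor `k`, and cancelling it gives
`g(t,k) = 2 ((-t E(-kt) - E(k)) / m₁ + (-t E(-kt) + E(-k)) / m₂) / (E(k) + E(-k))`,
a formula which also holds at `k = 0`. Its denominator is positive, so `g` is smooth.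
-/

/-- The function `g(t,k)` from the appendix of "On Positivity in Sasaki Geometry". -/
noncomputable def g (m₁ m₂ t k : ℝ) : ℝ :=
  if k = 0 then (1 - t) / m₂ - (1 + t) / m₁
  else 2 * ((1 / m₁ + 1 / m₂) * Real.exp (-k * t) -
      (Real.exp k / m₁ + Real.exp (-k) / m₂)) / (Real.exp k - Real.exp (-k))

theorem analyticAt_dslope_exp (x : ℝ) : AnalyticAt ℝ (dslope Real.exp 0) x := by
  rcases eq_or_ne x 0 with rfl | hx
  · obtain ⟨p, hp⟩ := analyticAt_rexp (x := (0 : ℝ))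
    exact hp.has_fpower_series_dslope_fslope.analyticAt
  · have h : AnalyticAt ℝ (fun y : ℝ => (Real.exp y - 1) / y) x :=
      (analyticAt_rexp.sub analyticAt_const).div analyticAt_id hx
    refine h.congr ?_
    filter_upwards [isOpen_ne.mem_nhds hx] with y hy
    rw [dslope_of_ne _ hy, slope_def_field]
    simp

theorem contDiff_dslope_exp : ContDiff ℝ 1 (dslope Real.exp 0) :=
  AnalyticOnNhd.contDiff fun x _ => analyticAt_dslope_exp x

theorem dslope_exp_zero : dslope Real.exp 0 0 = 1 := by
  simp [dslope_same]

theorem exp_eq_one_add_mul_dslope (x : ℝ) : Real.exp x = 1 + x * dslope Real.exp 0 x := by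
  have h := sub_smul_dslope Real.exp 0 x
  simp only [sub_zero, smul_eq_mul, Real.exp_zero] at h
  linarith

theorem dslope_exp_pos (x : ℝ) : 0 < dslope Real.exp 0 x := by
  have h := exp_eq_one_add_mul_dslope x
  rcases lt_trichotomy x 0 with hx | rfl | hx
  · have := Real.exp_lt_one_iff.2 hx
    by_contra! hn
    nlinarith
  · simp
  · have := Real.one_lt_exp_iff.2 hx
    by_contra! hn
    nlinarith

/-- The formula for `g` with the common factor `k` cancelled, valid for all `k`. -/
theorem g_eq_dslope (m₁ m₂ t k : ℝ) :
    g m₁ m₂ t k = 2 * ((-t * dslope Real.exp 0 (-k * t) - dslope Real.exp 0 k) / m₁ +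
      (-t * dslope Real.exp 0 (-k * t) + dslope Real.exp 0 (-k)) / m₂) /
      (dslope Real.exp 0 k + dslope Real.exp 0 (-k)) := by
  unfold g
  split_ifs with hk
  · subst hk
    simp only [neg_zero, zero_mul, dslope_exp_zero]
    ring
  · rw [exp_eq_one_add_mul_dslope (-k * t), exp_eq_one_add_mul_dslope k,
      exp_eq_one_add_mul_dslope (-k), ← mul_div_mul_left _ (dslope Real.exp 0 k + _) hk]
    congr 1 <;> ring

/-- `g` is continuously differentiable on `ℝ²`. -/
theorem g_contDiff (m₁ m₂ : ℝ) (hm₁ : 0 < m₁) (hm₂ : 0 < m₂) :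
    ContDiff ℝ 1 (fun p : ℝ × ℝ => g m₁ m₂ p.1 p.2) := by
  simp only [g_eq_dslope]
  have hE := contDiff_dslope_exp
  have h1 : ContDiff ℝ 1 (fun p : ℝ × ℝ => dslope Real.exp 0 (-p.2 * p.1)) :=
    hE.comp (contDiff_snd.neg.mul contDiff_fst)
  have h2 : ContDiff ℝ 1 (fun p : ℝ × ℝ => dslope Real.exp 0 p.2) := hE.comp contDiff_snd
  have h3 : ContDiff ℝ 1 (fun p : ℝ × ℝ => dslope Real.exp 0 (-p.2)) := hE.comp contDiff_snd.neg
  have h4 := (contDiff_fst (𝕜 := ℝ) (E := ℝ) (F := ℝ) (n := 1)).neg.mul h1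
  exact (contDiff_const.mul (((h4.sub h2).div_const m₁).add ((h4.add h3).div_const m₂))).div
    (h2.add h3) fun p => (add_pos (dslope_exp_pos _) (dslope_exp_pos _)).ne'
end

section
/- For every fixed t with −1 < t < 1, the function k ↦ g(t,k) is strictly decreasing on ℝ (its partial derivative with respect to k is strictly negative). -/
open Real in
/-- Strict convexity of `exp` between `-k` and `k`. -/
lemma exp_mul_lt_cosh_add (t k : ℝ) (ht₁ : -1 < t) (ht₂ : t < 1) (hk : k ≠ 0) :
    exp (k * t) < cosh k + t * sinh k := by
  have hne : k ≠ -k := fun h => hk (by linarith)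
  have h := strictConvexOn_exp.2 (Set.mem_univ k) (Set.mem_univ (-k)) hne
    (show 0 < (1 + t) / 2 by linarith) (show 0 < (1 - t) / 2 by linarith) (by ring)
  simp only [smul_eq_mul] at h
  rw [cosh_eq, sinh_eq]
  have e : (1 + t) / 2 * k + (1 - t) / 2 * -k = k * t := by ring
  rw [e] at h
  linarith

/-- The normalised quotient `(exp (-k t) - cosh k) / sinh k`, of which `g` is a positive affine
function for `k ≠ 0`; its value at `k = 0` is the junk value `0`, not the limit `-t`. -/
noncomputable def hq (t k : ℝ) : ℝ := (Real.exp (-k * t) - Real.cosh k) / Real.sinh k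

lemma g_eq_hq (m₁ m₂ t k : ℝ) (hk : k ≠ 0) :
    g m₁ m₂ t k = (1 / m₁ + 1 / m₂) * hq t k - 1 / m₁ + 1 / m₂ := by
  have hs : Real.sinh k ≠ 0 := fun h => hk (Real.sinh_eq_zero.1 h)
  have e1 : Real.exp k = Real.cosh k + Real.sinh k := (Real.cosh_add_sinh k).symm
  have e2 : Real.exp (-k) = Real.cosh k - Real.sinh k := (Real.cosh_sub_sinh k).symm
  rw [g, if_neg hk, hq, e1, e2,
    show Real.cosh k + Real.sinh k - (Real.cosh k - Real.sinh k) = 2 * Real.sinh k by ring]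
  simp only [div_eq_mul_inv _ m₁, div_eq_mul_inv _ m₂]
  generalize m₁⁻¹ = a
  generalize m₂⁻¹ = b
  field_simp
  ring

lemma hasDerivAt_hq (t k : ℝ) (hk : k ≠ 0) :
    HasDerivAt (hq t)
      ((1 - Real.exp (-k * t) * (Real.cosh k + t * Real.sinh k)) / Real.sinh k ^ 2) k := by
  have hs : Real.sinh k ≠ 0 := fun h => hk (Real.sinh_eq_zero.1 h)
  have h1 : HasDerivAt (fun k : ℝ => Real.exp (-k * t)) (Real.exp (-k * t) * (-1 * t)) k :=
    ((hasDerivAt_neg k).mul_const t).exp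
  convert! (h1.sub (Real.hasDerivAt_cosh k)).div (Real.hasDerivAt_sinh k) hs using 1
  congr 1
  simp only [Pi.sub_apply]
  linear_combination -Real.cosh_sq_sub_sinh_sq k

lemma deriv_hq_neg (t k : ℝ) (ht₁ : -1 < t) (ht₂ : t < 1) (hk : k ≠ 0) :
    deriv (hq t) k < 0 := by
  have hs : Real.sinh k ≠ 0 := fun h => hk (Real.sinh_eq_zero.1 h)
  rw [(hasDerivAt_hq t k hk).deriv]
  refine div_neg_of_neg_of_pos ?_ (by positivity)
  have h := mul_lt_mul_of_pos_left (exp_mul_lt_cosh_add t k ht₁ ht₂ hk) (Real.exp_pos (-k * t))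
  rw [← Real.exp_add, show -k * t + k * t = 0 by ring, Real.exp_zero] at h
  linarith

lemma hq_strictAntiOn {s : Set ℝ} (hc : Convex ℝ s) (h0 : (0 : ℝ) ∉ s) (t : ℝ)
    (ht₁ : -1 < t) (ht₂ : t < 1) : StrictAntiOn (hq t) s := by
  have hne : ∀ x ∈ s, x ≠ 0 := fun x hx h => h0 (h ▸ hx)
  exact strictAntiOn_of_deriv_neg hc
    (fun x hx => (hasDerivAt_hq t x (hne x hx)).continuousAt.continuousWithinAt)
    (fun x hx => deriv_hq_neg t x ht₁ ht₂ (hne x (interior_subset hx)))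

lemma hq_lt_of_pos (t k : ℝ) (ht₁ : -1 < t) (ht₂ : t < 1) (hk : 0 < k) : hq t k < -t := by
  have h := exp_mul_lt_cosh_add (-t) k (by linarith) (by linarith) hk.ne'
  rw [hq, div_lt_iff₀ (Real.sinh_pos_iff.2 hk), neg_mul_comm]
  linarith

lemma lt_hq_of_neg (t k : ℝ) (ht₁ : -1 < t) (ht₂ : t < 1) (hk : k < 0) : -t < hq t k := by
  have h := exp_mul_lt_cosh_add (-t) k (by linarith) (by linarith) hk.ne
  rw [hq, lt_div_iff_of_neg (Real.sinh_neg_iff.2 hk), neg_mul_comm]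
  linarith

/-- for fixed `−1 < t < 1`, the function `k ↦ g(t,k)` is strictly
decreasing on `ℝ`. -/
theorem g_strictAnti_in_k (m₁ m₂ : ℝ) (hm₁ : 0 < m₁) (hm₂ : 0 < m₂)
    (t : ℝ) (ht₁ : -1 < t) (ht₂ : t < 1) :
    StrictAnti (fun k => g m₁ m₂ t k) := by
  have hc : 0 < 1 / m₁ + 1 / m₂ := by positivity
  have g0 : g m₁ m₂ t 0 = (1 / m₁ + 1 / m₂) * (-t) - 1 / m₁ + 1 / m₂ := by
    rw [g, if_pos rfl]; ring
  have key : ∀ u v : ℝ, u < v → (1 / m₁ + 1 / m₂) * u - 1 / m₁ + 1 / m₂ <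
      (1 / m₁ + 1 / m₂) * v - 1 / m₁ + 1 / m₂ := fun u v huv => by
    have := mul_lt_mul_of_pos_left huv hc
    linarith
  intro x y hxy
  show g m₁ m₂ t y < g m₁ m₂ t x
  rcases eq_or_ne x 0 with rfl | hx
  · rw [g0, g_eq_hq _ _ _ _ hxy.ne']
    exact key _ _ (hq_lt_of_pos t y ht₁ ht₂ hxy)
  rcases eq_or_ne y 0 with rfl | hy
  · rw [g0, g_eq_hq _ _ _ _ hx]
    exact key _ _ (lt_hq_of_neg t x ht₁ ht₂ hxy)
  rw [g_eq_hq _ _ _ _ hx, g_eq_hq _ _ _ _ hy]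
  apply key
  rcases hx.lt_or_gt with hx' | hx'
  · rcases hy.lt_or_gt with hy' | hy'
    · exact hq_strictAntiOn (convex_Iio 0) (by simp) t ht₁ ht₂ hx' hy' hxy
    · exact (hq_lt_of_pos t y ht₁ ht₂ hy').trans (lt_hq_of_neg t x ht₁ ht₂ hx')
  · exact hq_strictAntiOn (convex_Ioi 0) (by simp) t ht₁ ht₂ hx' (hx'.trans hxy) hxy
end

section
/- There exists a unique real number k such that ∫_{−1}^{1} g(t,k)·p(t) dt = 0. -/
open Set Filter Topology MeasureTheory

/-- The slope `(x ^ s - 1) / (x - 1)` at `x = exp (2 k)`, continuously extended by `s` at `k = 0`. -/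
noncomputable def q (s k : ℝ) : ℝ :=
  if k = 0 then s else (Real.exp (2 * k * s) - 1) / (Real.exp (2 * k) - 1)

lemma exp_two_mul_sub_one_ne {k : ℝ} (hk : k ≠ 0) : Real.exp (2 * k) - 1 ≠ 0 := by
  intro h
  have : Real.exp (2 * k) = 1 := by linarith
  rw [Real.exp_eq_one_iff] at this
  exact hk (by linarith)

lemma g_eq_q (m₁ m₂ t k : ℝ) :
    g m₁ m₂ t k = 2 * ((1 / m₁ + 1 / m₂) * q ((1 - t) / 2) k - 1 / m₁) := by
  unfold g q
  split_ifs with hk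
  · ring
  · have h1 := exp_two_mul_sub_one_ne hk
    have e1 : Real.exp (2 * k * ((1 - t) / 2)) = Real.exp k * Real.exp (-k * t) := by
      rw [← Real.exp_add]; ring_nf
    have e2 : Real.exp (2 * k) = Real.exp k * Real.exp k := by
      rw [← Real.exp_add]; ring_nf
    rw [e2] at h1
    have hE := (Real.exp_pos k).ne'
    have e4 : Real.exp k - Real.exp (-k) = (Real.exp k * Real.exp k - 1) / Real.exp k := by
      rw [Real.exp_neg]; field_simp
    rw [e1, e2, e4, Real.exp_neg k]
    generalize Real.exp k = E at *
    generalize Real.exp (-k * t) = T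
    generalize hD : E * E - 1 = D at *
    simp only [div_eq_mul_inv, one_mul]
    generalize m₁⁻¹ = a
    generalize m₂⁻¹ = b
    field_simp
    rw [← hD]
    ring

lemma q_eq_dslope (s k : ℝ) :
    q s k = dslope (fun x : ℝ => x ^ s) 1 (Real.exp (2 * k)) := by
  unfold q
  split_ifs with hk
  · simp [hk, dslope_same]
  · have h1 := exp_two_mul_sub_one_ne hk
    rw [dslope_of_ne _ (sub_ne_zero.mp h1), slope_def_field, Real.one_rpow, ← Real.exp_mul]

lemma continuous_q_right (s : ℝ) : Continuous (q s) := by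
  have : q s = fun k => dslope (fun x : ℝ => x ^ s) 1 (Real.exp (2 * k)) :=
    funext (q_eq_dslope s)
  rw [this, continuous_iff_continuousAt]
  intro k
  have hd : ContinuousAt (dslope (fun x : ℝ => x ^ s) 1) (Real.exp (2 * k)) := by
    by_cases h : Real.exp (2 * k) = 1
    · rw [h, continuousAt_dslope_same]
      exact Real.differentiableAt_rpow_const_of_ne s one_ne_zero
    · rw [continuousAt_dslope_of_ne h]
      exact Real.continuousAt_rpow_const _ _ (Or.inl (Real.exp_pos _).ne')
  exact ContinuousAt.comp (f := fun k : ℝ => Real.exp (2 * k)) hd (by fun_prop)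

lemma continuous_q_left (k : ℝ) : Continuous (fun s => q s k) := by
  unfold q
  split_ifs
  · exact continuous_id
  · fun_prop

lemma q_mem_Icc {s : ℝ} (hs : s ∈ Icc (0 : ℝ) 1) (k : ℝ) : q s k ∈ Icc (0 : ℝ) 1 := by
  obtain ⟨h0, h1⟩ := hs
  unfold q
  split_ifs with hk
  · exact ⟨h0, h1⟩
  · rcases lt_or_gt_of_ne hk with hk | hk
    · have a1 : Real.exp (2 * k) < 1 := Real.exp_lt_one_iff.mpr (by linarith)
      have a2 : Real.exp (2 * k * s) ≤ 1 := Real.exp_le_one_iff.mpr (by nlinarith)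
      have a3 : Real.exp (2 * k) ≤ Real.exp (2 * k * s) := Real.exp_le_exp.mpr (by nlinarith)
      exact ⟨div_nonneg_of_nonpos (by linarith) (by linarith),
        (div_le_one_of_neg (by linarith)).mpr (by linarith)⟩
    · have a1 : 1 < Real.exp (2 * k) := Real.one_lt_exp_iff.mpr (by linarith)
      have a2 : 1 ≤ Real.exp (2 * k * s) := Real.one_le_exp (by positivity)
      have a3 : Real.exp (2 * k * s) ≤ Real.exp (2 * k) := Real.exp_le_exp.mpr (by nlinarith)
      exact ⟨div_nonneg (by linarith) (by linarith),
        (div_le_one (by linarith)).mpr (by linarith)⟩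

lemma q_strictAnti {s : ℝ} (h0 : 0 < s) (h1 : s < 1) : StrictAnti (q s) := by
  -- The tangent case `k = 0` is Bernoulli's inequality.
  have bern : ∀ k : ℝ, k ≠ 0 → Real.exp (2 * k * s) < 1 + s * (Real.exp (2 * k) - 1) := by
    intro k hk
    have := rpow_one_add_lt_one_add_mul_self (s := Real.exp (2 * k) - 1)
      (by linarith [Real.exp_pos (2 * k)]) (exp_two_mul_sub_one_ne hk) h0 h1
    rwa [add_sub_cancel, ← Real.exp_mul] at this
  intro x y hxy
  unfold q
  split_ifs with hy hx hx
  · exact absurd (hx.trans hy.symm) hxy.ne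
  · have hx' : x < 0 := by linarith
    have a1 : Real.exp (2 * x) < 1 := Real.exp_lt_one_iff.mpr (by linarith)
    rw [lt_div_iff_of_neg (by linarith)]
    linarith [bern x hx]
  · have hy' : 0 < y := by linarith
    have a1 : 1 < Real.exp (2 * y) := Real.one_lt_exp_iff.mpr (by linarith)
    rw [div_lt_iff₀ (by linarith)]
    linarith [bern y hy]
  · have := (Real.strictConcaveOn_rpow h0 h1).secant_strict_mono (a := 1)
      (x := Real.exp (2 * x)) (y := Real.exp (2 * y)) (by simp)
      (Real.exp_pos _).le (Real.exp_pos _).le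
      (sub_ne_zero.mp (exp_two_mul_sub_one_ne hx)) (sub_ne_zero.mp (exp_two_mul_sub_one_ne hy))
      (Real.exp_lt_exp.mpr (by linarith))
    simpa only [Real.one_rpow, ← Real.exp_mul] using this

lemma q_neg (s k : ℝ) : q s (-k) = 1 - q (1 - s) k := by
  unfold q
  by_cases hk : k = 0
  · simp [hk]
  · rw [if_neg (neg_ne_zero.mpr hk), if_neg hk]
    have h1 := exp_two_mul_sub_one_ne hk
    have h2 := exp_two_mul_sub_one_ne (neg_ne_zero.mpr hk)
    have e1 : Real.exp (2 * k * (1 - s)) = Real.exp (2 * k) * Real.exp (2 * -k * s) := by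
      rw [← Real.exp_add]; ring_nf
    have e2 : Real.exp (2 * -k) = (Real.exp (2 * k))⁻¹ := by
      rw [← Real.exp_neg]; ring_nf
    have e3 : Real.exp (2 * -k) - 1 = -((Real.exp (2 * k) - 1) / Real.exp (2 * k)) := by
      rw [e2]; field_simp; ring
    rw [e3, e1]
    have hE := (Real.exp_pos (2 * k)).ne'
    generalize Real.exp (2 * -k * s) = T
    generalize Real.exp (2 * k) = E at *
    generalize hD : E - 1 = D at *
    field_simp
    rw [← hD]; ring

lemma tendsto_q_atTop {s : ℝ} (h0 : 0 ≤ s) (h1 : s < 1) : Tendsto (q s) atTop (𝓝 0) := by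
  have hlim : Tendsto (fun k : ℝ => Real.exp (-((2 * (1 - s)) * k))) atTop (𝓝 0) :=
    Real.tendsto_exp_neg_atTop_nhds_zero.comp
      (tendsto_id.const_mul_atTop (by linarith : 0 < 2 * (1 - s)))
  refine squeeze_zero' (Eventually.of_forall fun k => (q_mem_Icc ⟨h0, h1.le⟩ k).1) ?_ hlim
  filter_upwards [eventually_gt_atTop 0] with k hk
  unfold q
  rw [if_neg hk.ne']
  have a1 : 1 < Real.exp (2 * k) := Real.one_lt_exp_iff.mpr (by linarith)
  have a2 : Real.exp (-((2 * (1 - s)) * k)) ≤ 1 :=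
    Real.exp_le_one_iff.mpr (by nlinarith [mul_pos (sub_pos.mpr h1) hk])
  have e : Real.exp (2 * k * s) = Real.exp (-((2 * (1 - s)) * k)) * Real.exp (2 * k) := by
    rw [← Real.exp_add]; ring_nf
  rw [div_le_iff₀ (by linarith), e]
  linarith

lemma tendsto_q_atBot {s : ℝ} (h0 : 0 < s) (h1 : s ≤ 1) : Tendsto (q s) atBot (𝓝 1) := by
  have h := ((tendsto_q_atTop (s := 1 - s) (by linarith) (by linarith)).comp
    tendsto_neg_atBot_atTop).const_sub 1
  rw [sub_zero] at h
  refine h.congr fun k => ?_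
  rw [Function.comp_apply, ← q_neg, neg_neg]

/-- Dominated convergence for the weighted integral of `q`, the dominating function being
the weight itself. -/
lemma tendsto_integral_q {p : ℝ → ℝ} (hp : Continuous p) {l : Filter ℝ}
    [l.IsCountablyGenerated] (f : ℝ → ℝ)
    (hf : ∀ s ∈ Ioo (0 : ℝ) 1, Tendsto (q s) l (𝓝 (f s))) :
    Tendsto (fun k => ∫ t in (-1 : ℝ)..1, q ((1 - t) / 2) k * p t) l
      (𝓝 (∫ t in (-1 : ℝ)..1, f ((1 - t) / 2) * p t)) := by
  refine intervalIntegral.tendsto_integral_filter_of_dominated_convergence (fun t => |p t|)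
    ?_ ?_ ?_ ?_
  · refine Eventually.of_forall fun k => Continuous.aestronglyMeasurable ?_
    exact ((continuous_q_left k).comp (by fun_prop : Continuous fun t : ℝ => (1 - t) / 2)).mul hp
  · refine Eventually.of_forall fun k => Eventually.of_forall fun t ht => ?_
    rw [uIoc_of_le (by norm_num)] at ht
    have := q_mem_Icc (s := (1 - t) / 2) ⟨by linarith [ht.2], by linarith [ht.1]⟩ k
    rw [Real.norm_eq_abs, abs_mul, abs_of_nonneg this.1]
    exact mul_le_of_le_one_left (abs_nonneg _) this.2
  · exact hp.abs.intervalIntegrable _ _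
  · -- The endpoint `t = 1`, where `s = 0`, is a null set.
    have hne : ∀ᵐ t : ℝ, t ≠ 1 := by simp [ae_iff]
    filter_upwards [hne] with t ht1 ht
    rw [uIoc_of_le (by norm_num)] at ht
    have : t < 1 := lt_of_le_of_ne ht.2 ht1
    exact (hf _ ⟨by linarith, by linarith [ht.1]⟩).mul_const _

/-- Lemma A.1: there is a unique `k ∈ ℝ` with
`∫_{−1}^{1} g(t,k) p(t) dt = 0`, where `p(t) = (1 + r t)^d`. -/
theorem exists_unique_k (m₁ m₂ : ℝ) (hm₁ : 0 < m₁) (hm₂ : 0 < m₂)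
    (r : ℝ) (hr₀ : 0 < |r|) (hr₁ : |r| < 1) (d : ℕ) :
    ∃! k : ℝ, ∫ t in (-1 : ℝ)..1, g m₁ m₂ t k * (1 + r * t) ^ d = 0 := by
  set p : ℝ → ℝ := fun t => (1 + r * t) ^ d with hp_def
  have hp : Continuous p := by fun_prop
  have hpos : ∀ t ∈ Icc (-1 : ℝ) 1, 0 < p t := by
    intro t ht
    have h1 : |r * t| < 1 := by
      rw [abs_mul]
      exact (mul_le_of_le_one_right (abs_nonneg r) (abs_le.mpr ht)).trans_lt hr₁
    exact pow_pos (by linarith [(abs_lt.mp h1).1]) d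
  have ha : 0 < 1 / m₁ := by positivity
  have hb : 0 < 1 / m₂ := by positivity
  set F : ℝ → ℝ := fun k => ∫ t in (-1 : ℝ)..1, q ((1 - t) / 2) k * p t with hF
  set P : ℝ := ∫ t in (-1 : ℝ)..1, p t with hP
  have hP0 : 0 < P := intervalIntegral.intervalIntegral_pos_of_pos_on
    (hp.intervalIntegrable _ _) (fun t ht => hpos t (Ioo_subset_Icc_self ht)) (by norm_num)
  have hqc : ∀ k, Continuous fun t : ℝ => q ((1 - t) / 2) k * p t := fun k =>
    ((continuous_q_left k).comp (by fun_prop : Continuous fun t : ℝ => (1 - t) / 2)).mul hp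
  have hcont : Continuous F := by
    rw [continuous_iff_continuousAt]
    intro k
    exact tendsto_integral_q hp (fun s => q s k)
      fun s _ => (continuous_q_right s).tendsto k
  have hanti : StrictAnti F := by
    intro x y hxy
    have h := intervalIntegral.intervalIntegral_pos_of_pos_on (a := (-1 : ℝ)) (b := 1)
      (f := fun t => q ((1 - t) / 2) x * p t - q ((1 - t) / 2) y * p t)
      (((hqc x).sub (hqc y)).intervalIntegrable _ _) (fun t ht => by
        have := q_strictAnti (s := (1 - t) / 2) (by linarith [ht.2]) (by linarith [ht.1]) hxy
        exact sub_pos.mpr (mul_lt_mul_of_pos_right this (hpos t (Ioo_subset_Icc_self ht))))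
      (by norm_num)
    rw [intervalIntegral.integral_sub ((hqc x).intervalIntegrable _ _)
      ((hqc y).intervalIntegrable _ _)] at h
    exact sub_pos.mp h
  have htop : Tendsto F atTop (𝓝 0) := by
    have := tendsto_integral_q hp (l := atTop) (fun _ => 0)
      fun s hs => tendsto_q_atTop hs.1.le hs.2
    simpa using this
  have hbot : Tendsto F atBot (𝓝 P) := by
    have := tendsto_integral_q hp (l := atBot) (fun _ => 1)
      fun s hs => tendsto_q_atBot hs.1 hs.2.le
    simpa using this
  have hkey : ∀ k, ∫ t in (-1 : ℝ)..1, g m₁ m₂ t k * (1 + r * t) ^ d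
      = 2 * ((1 / m₁ + 1 / m₂) * F k - 1 / m₁ * P) := by
    intro k
    have e : ∀ t, g m₁ m₂ t k * (1 + r * t) ^ d
        = 2 * (1 / m₁ + 1 / m₂) * (q ((1 - t) / 2) k * p t) - 2 * (1 / m₁) * p t := by
      intro t
      rw [g_eq_q, hp_def]
      ring
    simp_rw [e]
    rw [intervalIntegral.integral_sub (((hqc k).const_mul _).intervalIntegrable _ _)
      ((hp.const_mul _).intervalIntegrable _ _), intervalIntegral.integral_const_mul,
      intervalIntegral.integral_const_mul]
    ring
  have hc0 : 0 < 1 / m₁ / (1 / m₁ + 1 / m₂) * P := by positivity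
  have hc1 : 1 / m₁ / (1 / m₁ + 1 / m₂) * P < P :=
    mul_lt_of_lt_one_left hP0 ((div_lt_one (by positivity)).mpr (by linarith))
  obtain ⟨u, hu⟩ := (htop.eventually_lt_const hc0).exists
  obtain ⟨v, hv⟩ := (hbot.eventually_const_lt hc1).exists
  obtain ⟨k, hk⟩ := mem_range_of_exists_le_of_exists_ge hcont ⟨u, hu.le⟩ ⟨v, hv.le⟩
  have hiff : ∀ k', ∫ t in (-1 : ℝ)..1, g m₁ m₂ t k' * (1 + r * t) ^ d = 0 →
      F k' = 1 / m₁ / (1 / m₁ + 1 / m₂) * P := by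
    intro k' h
    rw [hkey] at h
    have hab : 1 / m₁ + 1 / m₂ ≠ 0 := by positivity
    rw [div_mul_eq_mul_div, eq_div_iff hab]
    linarith
  refine ⟨k, ?_, fun k' hk' => hanti.injective ((hiff k' hk').trans hk.symm)⟩
  have hab : 1 / m₁ + 1 / m₂ ≠ 0 := by positivity
  change ∫ t in (-1 : ℝ)..1, g m₁ m₂ t k * (1 + r * t) ^ d = 0
  rw [hkey, hk, div_mul_eq_mul_div, mul_div_cancel₀ _ hab]
  ring
end

section
/- The function f : ℝ → ℝ defined by f(k) = ∫_{−1}^{1} g(t,k)·p(t) dt is strictly decreasing on ℝ. -/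
/-- The exponential mass `∫_u^v e^{-kx} dx`. -/
noncomputable def expMass (k u v : ℝ) : ℝ := ∫ x in u..v, Real.exp (-k * x)

theorem expMass_zero (u v : ℝ) : expMass 0 u v = v - u := by
  simp [expMass]

theorem expMass_of_ne {k : ℝ} (hk : k ≠ 0) (u v : ℝ) :
    expMass k u v = (Real.exp (-k * u) - Real.exp (-k * v)) / k := by
  unfold expMass
  rw [intervalIntegral.integral_comp_mul_left (fun x => Real.exp x) (neg_ne_zero.mpr hk),
    integral_exp, smul_eq_mul]
  field_simp
  ring

theorem expMass_pos (k : ℝ) {u v : ℝ} (h : u < v) : 0 < expMass k u v :=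
  intervalIntegral.intervalIntegral_pos_of_pos
    ((by fun_prop : Continuous fun x : ℝ => Real.exp (-k * x)).intervalIntegrable _ _)
    (fun _ => Real.exp_pos _) h

theorem g_eq_weights (m₁ m₂ t k : ℝ) :
    g m₁ m₂ t k = 2 * (expMass k t 1 / m₂ - expMass k (-1) t / m₁) /
      (expMass k (-1) t + expMass k t 1) := by
  unfold g
  split_ifs with hk
  · subst hk
    rw [expMass_zero, expMass_zero]
    ring
  · have hd : Real.exp k - Real.exp (-k) ≠ 0 := by
      intro h
      have := Real.exp_injective (sub_eq_zero.mp h)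
      exact hk (by linarith)
    rw [expMass_of_ne hk, expMass_of_ne hk]
    simp only [mul_neg, mul_one, neg_neg]
    rw [show (Real.exp k - Real.exp (-k * t)) / k + (Real.exp (-k * t) - Real.exp (-k)) / k
      = (Real.exp k - Real.exp (-k)) / k by ring]
    field_simp
    ring

/-- Left of `t` the factor `e^{-(l-k)x}` exceeds its value at `t`. -/
theorem expMass_left_lt {k l t : ℝ} (hkl : k < l) (ht : -1 < t) :
    Real.exp (-(l - k) * t) * expMass k (-1) t < expMass l (-1) t := by
  unfold expMass
  rw [← intervalIntegral.integral_const_mul]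
  refine intervalIntegral.integral_lt_integral_of_continuousOn_of_le_of_exists_lt ht
    (by fun_prop) (by fun_prop) (fun x hx => ?_) ⟨-1, ⟨le_rfl, ht.le⟩, ?_⟩
  · rw [← Real.exp_add, Real.exp_le_exp]
    nlinarith [mul_nonneg (sub_nonneg.2 hkl.le) (sub_nonneg.2 hx.2)]
  · rw [← Real.exp_add, Real.exp_lt_exp]
    nlinarith [mul_pos (sub_pos.2 hkl) (sub_pos.2 ht)]

/-- Right of `t` the factor `e^{-(l-k)x}` is below its value at `t`. -/
theorem expMass_right_lt {k l t : ℝ} (hkl : k < l) (ht : t < 1) :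
    expMass l t 1 < Real.exp (-(l - k) * t) * expMass k t 1 := by
  unfold expMass
  rw [← intervalIntegral.integral_const_mul]
  refine intervalIntegral.integral_lt_integral_of_continuousOn_of_le_of_exists_lt ht
    (by fun_prop) (by fun_prop) (fun x hx => ?_) ⟨1, ⟨ht.le, le_rfl⟩, ?_⟩
  · rw [← Real.exp_add, Real.exp_le_exp]
    nlinarith [mul_nonneg (sub_nonneg.2 hkl.le) (sub_nonneg.2 hx.1.le)]
  · rw [← Real.exp_add, Real.exp_lt_exp]
    nlinarith [mul_pos (sub_pos.2 hkl) (sub_pos.2 ht)]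

theorem g_lt_g {m₁ m₂ : ℝ} (hm₁ : 0 < m₁) (hm₂ : 0 < m₂) {k l t : ℝ} (hkl : k < l)
    (ht₁ : -1 < t) (ht₂ : t < 1) : g m₁ m₂ t l < g m₁ m₂ t k := by
  rw [g_eq_weights, g_eq_weights]
  have hA := expMass_left_lt hkl ht₁
  have hB := expMass_right_lt hkl ht₂
  have a := expMass_pos k ht₁
  have b := expMass_pos k ht₂
  have a₂ := expMass_pos l ht₁
  have b₂ := expMass_pos l ht₂
  have key : expMass l t 1 * expMass k (-1) t < expMass k t 1 * expMass l (-1) t := by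
    have h₁ := mul_lt_mul_of_pos_right hB a
    have h₂ := mul_lt_mul_of_pos_left hA b
    linarith
  rw [div_lt_div_iff₀ (by positivity) (by positivity), ← sub_pos]
  -- The cross-multiplied difference is a positive multiple of the ratio inequality `key`.
  have h := mul_pos (show 0 < 2 * (1 / m₁ + 1 / m₂) by positivity) (sub_pos.2 key)
  convert h using 1
  ring

theorem continuous_g (m₁ m₂ k : ℝ) : Continuous fun t => g m₁ m₂ t k := by
  unfold g
  split_ifs <;> fun_prop

/-- `f(k) = ∫_{−1}^{1} g(t,k) (1 + r t)^d dt` is strictly decreasing on `ℝ`. -/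
theorem f_strictAnti (m₁ m₂ : ℝ) (hm₁ : 0 < m₁) (hm₂ : 0 < m₂)
    (r : ℝ) (hr₀ : 0 < |r|) (hr₁ : |r| < 1) (d : ℕ) :
    StrictAnti (fun k : ℝ => ∫ t in (-1 : ℝ)..1, g m₁ m₂ t k * (1 + r * t) ^ d) := by
  intro k l hkl
  have hc := continuous_g m₁ m₂
  have hlt : ∀ t ∈ Set.Ioo (-1 : ℝ) 1,
      g m₁ m₂ t l * (1 + r * t) ^ d < g m₁ m₂ t k * (1 + r * t) ^ d := by
    intro t ht
    obtain ⟨h₁, h₂⟩ := abs_lt.mp hr₁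
    have hp : 0 < 1 + r * t := by
      nlinarith [mul_pos (sub_pos.2 h₂) (sub_pos.2 ht.1), mul_pos (sub_pos.2 h₁) (sub_pos.2 ht.2),
        mul_pos (sub_pos.2 h₂) (sub_pos.2 ht.2), mul_pos (sub_pos.2 h₁) (sub_pos.2 ht.1)]
    exact mul_lt_mul_of_pos_right (g_lt_g hm₁ hm₂ hkl ht.1 ht.2) (pow_pos hp d)
  have hck : ∀ j, Continuous fun t => g m₁ m₂ t j * (1 + r * t) ^ d :=
    fun j => (hc j).mul (by fun_prop)
  refine intervalIntegral.integral_lt_integral_of_continuousOn_of_le_of_exists_lt (by norm_num)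
    (hck l).continuousOn (hck k).continuousOn (fun t ht => ?_)
    ⟨0, by norm_num, hlt 0 (by norm_num)⟩
  -- At the endpoint `t = 1` the inequality is obtained by continuity from the open interval.
  have hcl : t ∈ closure (Set.Ioo (-1 : ℝ) 1) := by
    rw [closure_Ioo (by norm_num)]
    exact Set.Ioc_subset_Icc_self ht
  exact closure_minimal (fun s hs => (hlt s hs).le) (isClosed_le (hck l) (hck k)) hcl
end

section
/- Let u : [−1,1] → ℝ be continuous and strictly decreasing with u(−1) > 0 and u(1) < 0, and let q : [−1,1] → ℝ be continuous and strictly positive. If ∫_{−1}^{1} u(t)·q(t) dt = 0, then ∫_{−1}^{z} u(t)·q(t) dt > 0 for every z with −1 < z < 1. -/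
/-- if `u` is continuous and strictly decreasing on `[−1,1]` with
`u(−1) > 0` and `u(1) < 0`, `q` is continuous and strictly positive on `[−1,1]`,
and `∫_{−1}^{1} u q = 0`, then `∫_{−1}^{z} u q > 0` for every `−1 < z < 1`. -/
theorem partial_integral_pos (u q : ℝ → ℝ)
    (hu_cont : ContinuousOn u (Set.Icc (-1 : ℝ) 1))
    (hu_anti : StrictAntiOn u (Set.Icc (-1 : ℝ) 1))
    (hu_neg1 : 0 < u (-1)) (hu_pos1 : u 1 < 0)
    (hq_cont : ContinuousOn q (Set.Icc (-1 : ℝ) 1))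
    (hq_pos : ∀ t ∈ Set.Icc (-1 : ℝ) 1, 0 < q t)
    (hint : ∫ t in (-1 : ℝ)..1, u t * q t = 0) :
    ∀ z : ℝ, -1 < z → z < 1 → 0 < ∫ t in (-1 : ℝ)..z, u t * q t := by
  intro z hz1 hz2
  have hcont : ContinuousOn (fun t => u t * q t) (Set.Icc (-1 : ℝ) 1) := hu_cont.mul hq_cont
  have hleft : IntervalIntegrable (fun t => u t * q t) MeasureTheory.volume (-1) z :=
    (hcont.mono (Set.Icc_subset_Icc_right hz2.le)).intervalIntegrable_of_Icc hz1.le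
  have hright : IntervalIntegrable (fun t => u t * q t) MeasureTheory.volume z 1 :=
    (hcont.mono (Set.Icc_subset_Icc_left hz1.le)).intervalIntegrable_of_Icc hz2.le
  have hz : z ∈ Set.Icc (-1 : ℝ) 1 := ⟨hz1.le, hz2.le⟩
  rcases le_total 0 (u z) with h | h
  -- If `0 ≤ u z`, the integrand is positive on `(-1, z)` because `u` decreases.
  · refine intervalIntegral.intervalIntegral_pos_of_pos_on hleft (fun t ht => ?_) hz1
    have htm : t ∈ Set.Icc (-1 : ℝ) 1 := ⟨ht.1.le, (ht.2.trans hz2).le⟩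
    exact mul_pos (h.trans_lt (hu_anti htm hz ht.2)) (hq_pos t htm)
  -- If `u z ≤ 0`, the integrand is negative on `(z, 1)`, and the integral over `[-1, z]`
  -- is minus the integral over `[z, 1]`.
  · have hneg : 0 < ∫ t in z..1, -(u t * q t) := by
      refine intervalIntegral.intervalIntegral_pos_of_pos_on hright.neg (fun t ht => ?_) hz2
      have htm : t ∈ Set.Icc (-1 : ℝ) 1 := ⟨(hz1.trans ht.1).le, ht.2.le⟩
      exact neg_pos.mpr
        (mul_neg_of_neg_of_pos ((hu_anti hz htm ht.1).trans_le h) (hq_pos t htm))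
    rw [intervalIntegral.integral_neg] at hneg
    have hsum := intervalIntegral.integral_add_adjacent_intervals hleft hright
    linarith
end

section
/- There exists a real number k such that the function F(z) = ∫_{−1}^{z} g(t,k)·p(t) dt satisfies: F(−1) = 0 and F(1) = 0; F(z) > 0 for every z with −1 < z < 1; F is differentiable with F′(z) = g(z,k)·p(z), so that F′(−1) = 2·p(−1)/m₂ and F′(1) = −2·p(1)/m₁; and the function z ↦ F′(z)/p(z) is strictly decreasing on [−1,1]. -/
/-- `p(t) = (1 + r t)^d`. -/
noncomputable def p (r : ℝ) (d : ℕ) (t : ℝ) : ℝ := (1 + r * t) ^ d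

/-- The continuous extension of `(exp x - 1) / x` to `x = 0`. -/
noncomputable def psi (x : ℝ) : ℝ := dslope Real.exp 0 x

/-- The profile `(exp (-k t) - exp (-k)) / (exp k - exp (-k))`, written so that it also makes sense
(and is continuous) at `k = 0`, where it is `(1 - t) / 2`. -/
noncomputable def phi (t k : ℝ) : ℝ := (1 - t) * psi (k * (1 - t)) / (2 * psi (2 * k))

lemma psi_zero : psi 0 = 1 := by simp [psi]

lemma psi_mul (x : ℝ) : x * psi x = Real.exp x - 1 := by
  have := sub_smul_dslope Real.exp 0 x
  simpa [psi] using this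

lemma psi_pos (x : ℝ) : 0 < psi x := by
  have h := psi_mul x
  rcases lt_trichotomy x 0 with hx | hx | hx
  · have : Real.exp x < 1 := by simpa using hx
    nlinarith
  · simp [hx, psi_zero]
  · have : 1 < Real.exp x := Real.one_lt_exp_iff.2 hx
    by_contra hc
    nlinarith

lemma psi_continuous : Continuous psi := by
  rw [← continuousOn_univ]
  exact (continuousOn_dslope Filter.univ_mem).2
    ⟨Real.continuous_exp.continuousOn, Real.differentiableAt_exp⟩

lemma phi_continuous : Continuous fun q : ℝ × ℝ => phi q.2 q.1 := by
  unfold phi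
  have := psi_continuous
  exact Continuous.div (by fun_prop) (by fun_prop) fun q => by
    have := psi_pos (2 * q.1)
    positivity

lemma exp_sub_ne {k : ℝ} (hk : k ≠ 0) : Real.exp k - Real.exp (-k) ≠ 0 := by
  intro h
  have := Real.exp_injective (sub_eq_zero.1 h)
  exact hk (by linarith)

lemma phi_of_ne {k : ℝ} (hk : k ≠ 0) (t : ℝ) :
    phi t k = (Real.exp (-k * t) - Real.exp (-k)) / (Real.exp k - Real.exp (-k)) := by
  have h2 := psi_pos (2 * k)
  rw [phi, div_eq_div_iff (by positivity) (exp_sub_ne hk)]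
  have e1 := psi_mul (k * (1 - t))
  have e2 := psi_mul (2 * k)
  have f1 : Real.exp (-k * t) = Real.exp (-k) * Real.exp (k * (1 - t)) := by
    rw [← Real.exp_add]; ring_nf
  have f2 : Real.exp k = Real.exp (-k) * Real.exp (2 * k) := by
    rw [← Real.exp_add]; ring_nf
  have f1' : Real.exp (-k * t) - Real.exp (-k)
      = Real.exp (-k) * (k * (1 - t) * psi (k * (1 - t))) := by
    rw [f1, e1]; ring
  have f2' : Real.exp k - Real.exp (-k) = Real.exp (-k) * (2 * k * psi (2 * k)) := by
    rw [f2, e2]; ring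
  rw [f1', f2']; ring

lemma phi_zero (t : ℝ) : phi t 0 = (1 - t) / 2 := by simp [phi, psi_zero]

lemma phi_neg_one (k : ℝ) : phi (-1) k = 1 := by
  have h := psi_pos (2 * k)
  rw [phi, show k * (1 - -1) = 2 * k by ring]
  field_simp
  norm_num

lemma phi_one (k : ℝ) : phi 1 k = 0 := by simp [phi]

lemma phi_strictAnti (k : ℝ) : StrictAnti fun t => phi t k := by
  intro s t hst
  rcases eq_or_ne k 0 with rfl | hk
  · simp only [phi_zero]; linarith
  simp only [phi_of_ne hk]
  rcases lt_or_gt_of_ne hk with h | h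
  · apply div_lt_div_of_neg_of_lt
    · simpa using (by linarith : k < -k)
    · have : Real.exp (-k * s) < Real.exp (-k * t) := Real.exp_lt_exp.2 (by nlinarith)
      linarith
  · apply div_lt_div_of_pos_right
    · have : Real.exp (-k * t) < Real.exp (-k * s) := Real.exp_lt_exp.2 (by nlinarith)
      linarith
    · simpa using (by linarith : -k < k)

lemma phi_symm (t k : ℝ) : phi t k = 1 - phi (-t) (-k) := by
  rcases eq_or_ne k 0 with rfl | hk
  · simp only [neg_zero, phi_zero]; ring
  rw [phi_of_ne hk, phi_of_ne (neg_ne_zero.2 hk)]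
  have h := exp_sub_ne hk
  have h' := exp_sub_ne (neg_ne_zero.2 hk)
  simp only [neg_neg, mul_neg, neg_mul] at *
  field_simp
  ring

lemma phi_mem {t : ℝ} (k : ℝ) (ht : t ∈ Set.Icc (-1 : ℝ) 1) : 0 ≤ phi t k ∧ phi t k ≤ 1 := by
  constructor
  · rw [← phi_one k]; exact (phi_strictAnti k).antitone ht.2
  · rw [← phi_neg_one k]; exact (phi_strictAnti k).antitone ht.1

lemma phi_le {t k : ℝ} (hk : 0 < k) (ht : -1 ≤ t) :
    phi t k ≤ Real.exp (-(k * (1 + t))) := by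
  rw [phi_of_ne hk.ne', div_le_iff₀ (by simpa using (by linarith : -k < k))]
  have e1 : Real.exp (-(k * (1 + t))) * (Real.exp k - Real.exp (-k))
      = Real.exp (-k * t) - Real.exp (-k - k * (1 + t)) := by
    rw [mul_sub, ← Real.exp_add, ← Real.exp_add]; ring_nf
  rw [e1]
  have : Real.exp (-k - k * (1 + t)) ≤ Real.exp (-k) := Real.exp_le_exp.2 (by nlinarith)
  linarith

lemma phi_tendsto_atTop {t : ℝ} (ht : t ∈ Set.Ioo (-1 : ℝ) 1) :
    Filter.Tendsto (fun k => phi t k) Filter.atTop (nhds 0) := by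
  have h : Filter.Tendsto (fun k : ℝ => Real.exp (-(k * (1 + t)))) Filter.atTop (nhds 0) :=
    Real.tendsto_exp_neg_atTop_nhds_zero.comp
      (Filter.tendsto_id.atTop_mul_const (by linarith [ht.1]))
  refine tendsto_of_tendsto_of_tendsto_of_le_of_le' tendsto_const_nhds h ?_ ?_
  · exact Filter.Eventually.of_forall fun k => (phi_mem k ⟨ht.1.le, ht.2.le⟩).1
  · filter_upwards [Filter.eventually_gt_atTop 0] with k hk using phi_le hk ht.1.le

lemma phi_tendsto_atBot {t : ℝ} (ht : t ∈ Set.Ioo (-1 : ℝ) 1) :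
    Filter.Tendsto (fun k => phi t k) Filter.atBot (nhds 1) := by
  have h := (phi_tendsto_atTop (t := -t) ⟨by linarith [ht.2], by linarith [ht.1]⟩).comp
    Filter.tendsto_neg_atBot_atTop
  simpa [Function.comp_def, ← phi_symm] using h.const_sub 1

lemma g_eq (m₁ m₂ t k : ℝ) : g m₁ m₂ t k = 2 * ((1 / m₁ + 1 / m₂) * phi t k - 1 / m₁) := by
  unfold g
  split_ifs with hk
  · rw [hk, phi_zero]; ring
  · rw [phi_of_ne hk]
    have h := exp_sub_ne hk
    rw [eq_comm, eq_div_iff h]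
    calc _ = 2 * ((1 / m₁ + 1 / m₂) * ((Real.exp (-k * t) - Real.exp (-k)) /
            (Real.exp k - Real.exp (-k)) * (Real.exp k - Real.exp (-k)))
            - 1 / m₁ * (Real.exp k - Real.exp (-k))) := by ring
      _ = _ := by rw [div_mul_cancel₀ _ h]; ring

lemma p_pos {r : ℝ} (hr : |r| < 1) (d : ℕ) {t : ℝ} (ht : t ∈ Set.Icc (-1 : ℝ) 1) :
    0 < p r d t := by
  have h1 : |r * t| ≤ |r| := by
    rw [abs_mul]
    exact mul_le_of_le_one_right (abs_nonneg r) (abs_le.2 ht)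
  have : 0 < 1 + r * t := by linarith [neg_abs_le (r * t)]
  exact pow_pos this d

lemma p_continuous (r : ℝ) (d : ℕ) : Continuous (p r d) := by
  unfold p; fun_prop

lemma gp_continuous (m₁ m₂ r : ℝ) (d : ℕ) :
    Continuous fun q : ℝ × ℝ => g m₁ m₂ q.2 q.1 * p r d q.2 := by
  simp only [g_eq]
  have := phi_continuous
  have := p_continuous r d
  fun_prop

lemma gp_continuous_left (m₁ m₂ r : ℝ) (d : ℕ) (k : ℝ) :
    Continuous fun t => g m₁ m₂ t k * p r d t :=
  (gp_continuous m₁ m₂ r d).comp (by fun_prop : Continuous fun t : ℝ => (k, t))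

/-- Dominated convergence for the total integral, used with `L = 0` at `+∞` and `L = 1` at `-∞`. -/
lemma integral_tendsto {m₁ m₂ : ℝ} (r : ℝ) (d : ℕ) (l : Filter ℝ) [l.IsCountablyGenerated] (L : ℝ)
    (h : ∀ t ∈ Set.Ioo (-1 : ℝ) 1, Filter.Tendsto (fun k => phi t k) l (nhds L)) :
    Filter.Tendsto (fun k => ∫ t in (-1 : ℝ)..1, g m₁ m₂ t k * p r d t) l
      (nhds (∫ t in (-1 : ℝ)..1, 2 * ((1 / m₁ + 1 / m₂) * L - 1 / m₁) * p r d t)) := by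
  have hp := p_continuous r d
  refine intervalIntegral.tendsto_integral_filter_of_dominated_convergence
    (fun t => 2 * (|1 / m₁ + 1 / m₂| + |1 / m₁|) * |p r d t|) ?_ ?_ ?_ ?_
  · exact Filter.Eventually.of_forall fun k =>
      (gp_continuous_left m₁ m₂ r d k).aestronglyMeasurable
  · refine Filter.Eventually.of_forall fun k => Filter.Eventually.of_forall fun t ht => ?_
    rw [Set.uIoc_of_le (by norm_num)] at ht
    have hφ := phi_mem k ⟨ht.1.le, ht.2⟩
    rw [Real.norm_eq_abs, abs_mul, g_eq, abs_mul, abs_two]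
    gcongr
    refine (abs_sub _ _).trans ?_
    rw [abs_mul, abs_of_nonneg hφ.1]
    gcongr
    exact mul_le_of_le_one_right (abs_nonneg _) hφ.2
  · exact Continuous.intervalIntegrable (by fun_prop) _ _
  · -- The endpoint `t = 1` is a null set.
    have h1 : ∀ᵐ t : ℝ, t ≠ 1 := by simp [MeasureTheory.ae_iff]
    filter_upwards [h1] with t ht1 ht
    rw [Set.uIoc_of_le (by norm_num)] at ht
    simp only [g_eq]
    exact ((((h t ⟨ht.1, lt_of_le_of_ne ht.2 ht1⟩).const_mul _).sub_const _).const_mul _).mul_const _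

lemma exists_integral_zero {m₁ m₂ : ℝ} (hm₁ : 0 < m₁) (hm₂ : 0 < m₂) {r : ℝ} (hr : |r| < 1)
    (d : ℕ) : ∃ k : ℝ, (∫ t in (-1 : ℝ)..1, g m₁ m₂ t k * p r d t) = 0 := by
  have hP : 0 < ∫ t in (-1 : ℝ)..1, p r d t :=
    intervalIntegral.intervalIntegral_pos_of_pos_on ((p_continuous r d).intervalIntegrable _ _)
      (fun t ht => p_pos hr d ⟨ht.1.le, ht.2.le⟩) (by norm_num)
  have hc : Continuous fun k => ∫ t in (-1 : ℝ)..1, g m₁ m₂ t k * p r d t :=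
    intervalIntegral.continuous_parametric_intervalIntegral_of_continuous'
      (gp_continuous m₁ m₂ r d) _ _
  have i₁ : 0 < 1 / m₁ := by positivity
  have i₂ : 0 < 1 / m₂ := by positivity
  have hT := integral_tendsto (m₁ := m₁) (m₂ := m₂) r d Filter.atTop 0
    fun t ht => phi_tendsto_atTop ht
  have hB := integral_tendsto (m₁ := m₁) (m₂ := m₂) r d Filter.atBot 1
    fun t ht => phi_tendsto_atBot ht
  rw [intervalIntegral.integral_const_mul] at hT hB
  obtain ⟨k₁, h₁⟩ := (hT.eventually_lt_const (u := 0)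
    (mul_neg_of_neg_of_pos (by linarith) hP)).exists
  obtain ⟨k₂, h₂⟩ := (hB.eventually_const_lt (u := 0) (mul_pos (by linarith) hP)).exists
  exact mem_range_of_exists_le_of_exists_ge hc ⟨k₁, h₁.le⟩ ⟨k₂, h₂.le⟩

lemma g_strictAnti {m₁ m₂ : ℝ} (hm₁ : 0 < m₁) (hm₂ : 0 < m₂) (k : ℝ) :
    StrictAnti fun t => g m₁ m₂ t k := by
  intro s t hst
  simp only [g_eq]
  have : phi t k < phi s k := phi_strictAnti k hst
  gcongr

/-- there is `k ∈ ℝ` such that `F(z) = ∫_{−1}^{z} g(t,k) p(t) dt` satisfies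
`F(±1) = 0`, `F > 0` on `(−1,1)`, `F` is differentiable with `F′(z) = g(z,k) p(z)`
(so `F′(−1) = 2 p(−1)/m₂` and `F′(1) = −2 p(1)/m₁`), and `z ↦ F′(z)/p(z)` is strictly
decreasing on `[−1,1]`. -/
theorem exists_good_F (m₁ m₂ : ℝ) (hm₁ : 0 < m₁) (hm₂ : 0 < m₂)
    (r : ℝ) (hr₀ : 0 < |r|) (hr₁ : |r| < 1) (d : ℕ) :
    ∃ k : ℝ,
      (∫ t in (-1 : ℝ)..(-1 : ℝ), g m₁ m₂ t k * p r d t) = 0 ∧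
      (∫ t in (-1 : ℝ)..(1 : ℝ), g m₁ m₂ t k * p r d t) = 0 ∧
      (∀ z : ℝ, -1 < z → z < 1 → 0 < ∫ t in (-1 : ℝ)..z, g m₁ m₂ t k * p r d t) ∧
      (∀ z : ℝ, HasDerivAt (fun z : ℝ => ∫ t in (-1 : ℝ)..z, g m₁ m₂ t k * p r d t)
        (g m₁ m₂ z k * p r d z) z) ∧
      g m₁ m₂ (-1) k * p r d (-1) = 2 * p r d (-1) / m₂ ∧
      g m₁ m₂ 1 k * p r d 1 = -2 * p r d 1 / m₁ ∧
      StrictAntiOn (fun z : ℝ => g m₁ m₂ z k * p r d z / p r d z) (Set.Icc (-1 : ℝ) 1) := by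
  obtain ⟨k, hk⟩ := exists_integral_zero hm₁ hm₂ hr₁ d
  have hc := gp_continuous_left m₁ m₂ r d k
  have hg := g_strictAnti hm₁ hm₂ k
  refine ⟨k, by simp, hk, ?_, ?_, ?_, ?_, ?_⟩
  · intro z hz1 hz2
    rcases le_or_gt 0 (g m₁ m₂ z k) with h | h
    · refine intervalIntegral.intervalIntegral_pos_of_pos_on (hc.intervalIntegrable _ _)
        (fun t ht => ?_) hz1
      have : g m₁ m₂ z k < g m₁ m₂ t k := hg ht.2
      exact mul_pos (by linarith) (p_pos hr₁ d ⟨ht.1.le, by linarith [ht.2]⟩)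
    · -- Past the sign change of `g`, use `F(z) = -∫_z^1 g p`.
      have hadd := intervalIntegral.integral_add_adjacent_intervals
        (hc.intervalIntegrable (μ := MeasureTheory.volume) (-1) z) (hc.intervalIntegrable z 1)
      have hpos : 0 < ∫ t in z..1, -(g m₁ m₂ t k * p r d t) := by
        refine intervalIntegral.intervalIntegral_pos_of_pos_on (hc.neg.intervalIntegrable _ _)
          (fun t ht => ?_) hz2
        have : g m₁ m₂ t k < g m₁ m₂ z k := hg ht.1
        have := p_pos hr₁ d (t := t) ⟨by linarith [ht.1], ht.2.le⟩
        nlinarith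
      rw [intervalIntegral.integral_neg] at hpos
      linarith
  · exact fun z => (hc.integral_hasStrictDerivAt (-1) z).hasDerivAt
  · rw [g_eq, phi_neg_one]; ring
  · rw [g_eq, phi_one]; ring
  · intro s hs t ht hst
    simp only [mul_div_cancel_right₀ _ (p_pos hr₁ d hs).ne',
      mul_div_cancel_right₀ _ (p_pos hr₁ d ht).ne']
    exact hg hst
end

section
/- Let I, l₁, l₂, w₁, w₂ be strictly positive real numbers with w₁ ≥ w₂, and suppose l₁·w₂ ≤ I·l₂ < l₁·w₁ (equivalently 1 ≤ I·l₂/(w₂·l₁) < w₁/w₂). Then a pair (v₁,v₂) of positive reals satisfies the positivity conditions if and only if v₁/v₂ > w₁/w₂ − (l₂·I)/(l₁·w₂). -/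
/-!
Put `D = w₁ v₂ - w₂ v₁`. Multiplying the ratio bound by `l₁ w₂ v₂ > 0` turns it into
`0 < I l₂ v₂ - l₁ D`, the inequality required by the first condition. That inequality is automatic
when `D ≤ 0`, so the first condition is equivalent to the ratio bound; the second condition is
automatic because `I l₂ v₁ + l₁ D = (I l₂ - l₁ w₂) v₁ + l₁ w₁ v₂` and `l₁ w₂ ≤ I l₂`.
-/

/-- The positivity conditions (Equation (19) of the paper) for a pair `(v₁, v₂)`. -/
def PosConds (I l₁ l₂ w₁ w₂ v₁ v₂ : ℝ) : Prop :=
  (0 < w₁ * v₂ - w₂ * v₁ → 0 < I * l₂ * v₂ - l₁ * (w₁ * v₂ - w₂ * v₁)) ∧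
  (w₁ * v₂ - w₂ * v₁ < 0 → 0 < I * l₂ * v₁ + l₁ * (w₁ * v₂ - w₂ * v₁))

/-- if `l₁ w₂ ≤ I l₂ < l₁ w₁`, then a positive pair `(v₁,v₂)` satisfies the
positivity conditions iff `v₁/v₂ > w₁/w₂ − (l₂ I)/(l₁ w₂)`. -/
theorem positivity_range_middle (I l₁ l₂ w₁ w₂ : ℝ)
    (hI : 0 < I) (hl₁ : 0 < l₁) (hl₂ : 0 < l₂) (hw₁ : 0 < w₁) (hw₂ : 0 < w₂)
    (hw : w₂ ≤ w₁) (h₁ : l₁ * w₂ ≤ I * l₂) (h₂ : I * l₂ < l₁ * w₁) :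
    ∀ v₁ v₂ : ℝ, 0 < v₁ → 0 < v₂ →
      (PosConds I l₁ l₂ w₁ w₂ v₁ v₂ ↔
        w₁ / w₂ - (l₂ * I) / (l₁ * w₂) < v₁ / v₂) := by
  intro v₁ v₂ hv₁ hv₂
  -- The ratio bound is the first positivity inequality, divided by `l₁ * w₂ * v₂ > 0`.
  have key : w₁ / w₂ - (l₂ * I) / (l₁ * w₂) < v₁ / v₂ ↔
      0 < I * l₂ * v₂ - l₁ * (w₁ * v₂ - w₂ * v₁) := by
    have e : v₁ / v₂ - (w₁ / w₂ - (l₂ * I) / (l₁ * w₂)) =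
        (I * l₂ * v₂ - l₁ * (w₁ * v₂ - w₂ * v₁)) / (l₁ * w₂ * v₂) := by
      field_simp
      ring
    rw [← sub_pos, e]
    exact div_pos_iff_of_pos_right (by positivity)
  rw [key]
  have hIv : 0 < I * l₂ * v₂ := by positivity
  constructor
  · rintro ⟨hpos, -⟩
    rcases lt_or_ge 0 (w₁ * v₂ - w₂ * v₁) with h | h
    · exact hpos h
    · linarith [mul_nonpos_of_nonneg_of_nonpos hl₁.le h]
  · refine fun h => ⟨fun _ => h, fun _ => ?_⟩
    -- The second condition always holds: the expression equals
    -- `(I * l₂ - l₁ * w₂) * v₁ + l₁ * w₁ * v₂`, and `l₁ * w₂ ≤ I * l₂`.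
    have ha : 0 ≤ (I * l₂ - l₁ * w₂) * v₁ := mul_nonneg (sub_nonneg.2 h₁) hv₁.le
    have hb : 0 < l₁ * w₁ * v₂ := by positivity
    linarith
end
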